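/- In the online Ramsey game with targets red C₄ and blue P₆, consider the position in which the five edges v₁v₂, v₂v₃, v₃v₄, v₄v₅, v₅v₆ of a path on six distinct vertices have been colored red, blue, red, red, blue respectively (case R7). From this position Builder can force a red copy of C₄ or a blue copy of P₆ within at most 6 additional rounds, so within at most 11 rounds in total. -/

import Mathlib

open SimpleGraph

/-- The set `S` of edges of the infinite complete graph on `ℕ` contains a copy of
the graph `G`: there is an injective map of the vertices of `G` into `ℕ` sending
every edge of `G` into `S`. -/
def HasCopy {V : Type*} (G : SimpleGraph V) (S : Set (Sym2 ℕ)) : Prop :=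
  ∃ f : V → ℕ, Function.Injective f ∧ ∀ a b, G.Adj a b → s(f a, f b) ∈ S

/-- `BuilderWinsIn G H R B r` means: in the online Ramsey game with targets a red copy
of `G` and a blue copy of `H`, from the position in which the edges in `R` have been
colored red and the edges in `B` have been colored blue, Builder has a strategy that
guarantees, against every Painter strategy, that within at most `r` further rounds the
colored edges contain a red copy of `G` or a blue copy of `H`.  (In each round Builder
chooses a previously unchosen non-loop edge of the infinite complete graph on `ℕ`, and
Painter immediately colors it red or blue; so Builder wins within `r + 1` rounds iff he
has already won, or he can choose an edge such that whichever color Painter gives it,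
he can win within `r` further rounds.) -/
def BuilderWinsIn {V W : Type*} (G : SimpleGraph V) (H : SimpleGraph W) :
    Set (Sym2 ℕ) → Set (Sym2 ℕ) → ℕ → Prop
  | R, B, 0 => HasCopy G R ∨ HasCopy H B
  | R, B, (r + 1) => HasCopy G R ∨ HasCopy H B ∨
      ∃ e : Sym2 ℕ, ¬ e.IsDiag ∧ e ∉ R ∧ e ∉ B ∧
        BuilderWinsIn G H (insert e R) B r ∧ BuilderWinsIn G H R (insert e B) r

/-- The online size Ramsey number `ř(G, H)`: the least `t` such that, starting from the
empty position, Builder can force a red copy of `G` or a blue copy of `H` within at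
most `t` rounds. -/
noncomputable def onlineRamsey {V W : Type*} (G : SimpleGraph V) (H : SimpleGraph W) : ℕ :=
  sInf {t | BuilderWinsIn G H ∅ ∅ t}

/-- A Builder strategy on seven vertices, whose leaves name the monochromatic copy obtained. -/
inductive Strat : Type
  | red (a b c d : Fin 7) : Strat
  | blue (a b c d e f : Fin 7) : Strat
  | move (x y : Fin 7) (l r : Strat) : Strat

/-- Membership of an unordered pair in a list of pairs. -/
def memE (L : List (Fin 7 × Fin 7)) (x y : Fin 7) : Bool :=
  L.contains (x, y) || L.contains (y, x)

/-- Checks that a strategy wins within the given number of rounds. -/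
def Strat.check : Strat → List (Fin 7 × Fin 7) → List (Fin 7 × Fin 7) → ℕ → Bool
  | .red a b c d, R, _, _ => decide [a, b, c, d].Nodup &&
      (memE R a b && memE R b c && memE R c d && memE R d a)
  | .blue a b c d e f, _, B, _ => decide [a, b, c, d, e, f].Nodup &&
      (memE B a b && memE B b c && memE B c d && memE B d e && memE B e f)
  | .move _ _ _ _, _, _, 0 => false
  | .move x y l r, R, B, n + 1 => decide (x ≠ y) && (!memE R x y && !memE B x y) &&
      (l.check ((x, y) :: R) B n && r.check R ((x, y) :: B) n)

/-- The edges of `ℕ` given by a list of pairs of labels. -/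
def edgesOf (w : Fin 7 → ℕ) (L : List (Fin 7 × Fin 7)) : Set (Sym2 ℕ) :=
  {e | ∃ p ∈ L, s(w p.1, w p.2) = e}

theorem edgesOf_cons (w : Fin 7 → ℕ) (x y : Fin 7) (L : List (Fin 7 × Fin 7)) :
    edgesOf w ((x, y) :: L) = insert s(w x, w y) (edgesOf w L) := by
  ext e
  simp [edgesOf, eq_comm]

theorem mem_edgesOf {w : Fin 7 → ℕ} (hw : Function.Injective w)
    (L : List (Fin 7 × Fin 7)) (x y : Fin 7) :
    s(w x, w y) ∈ edgesOf w L ↔ memE L x y = true := by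
  simp only [edgesOf, memE, Set.mem_setOf_eq, Bool.or_eq_true, List.contains_iff_mem,
    Sym2.eq_iff, hw.eq_iff]
  constructor
  · rintro ⟨⟨a, b⟩, h, ⟨rfl, rfl⟩ | ⟨rfl, rfl⟩⟩
    · exact Or.inl h
    · exact Or.inr h
  · rintro (h | h)
    · exact ⟨_, h, by simp⟩
    · exact ⟨_, h, by simp⟩

theorem hasCopy_cycle {w : Fin 7 → ℕ} (hw : Function.Injective w)
    {L : List (Fin 7 × Fin 7)} {a b c d : Fin 7} (hn : [a, b, c, d].Nodup)
    (h1 : memE L a b = true) (h2 : memE L b c = true) (h3 : memE L c d = true)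
    (h4 : memE L d a = true) : HasCopy (cycleGraph 4) (edgesOf w L) := by
  rw [← mem_edgesOf hw] at h1 h2 h3 h4
  refine ⟨fun i => w ([a, b, c, d].get i),
    hw.comp (List.nodup_iff_injective_get.mp hn), ?_⟩
  intro i j hij
  rw [cycleGraph_adj] at hij
  fin_cases i <;> fin_cases j <;> first
    | exact absurd hij (by decide)
    | assumption
    | (rw [Sym2.eq_swap]; assumption)

theorem hasCopy_path {w : Fin 7 → ℕ} (hw : Function.Injective w)
    {L : List (Fin 7 × Fin 7)} {a b c d e f : Fin 7} (hn : [a, b, c, d, e, f].Nodup)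
    (h1 : memE L a b = true) (h2 : memE L b c = true) (h3 : memE L c d = true)
    (h4 : memE L d e = true) (h5 : memE L e f = true) :
    HasCopy (pathGraph 6) (edgesOf w L) := by
  rw [← mem_edgesOf hw] at h1 h2 h3 h4 h5
  refine ⟨fun i => w ([a, b, c, d, e, f].get i),
    hw.comp (List.nodup_iff_injective_get.mp hn), ?_⟩
  intro i j hij
  rw [pathGraph_adj] at hij
  fin_cases i <;> fin_cases j <;> first
    | exact absurd hij (by decide)
    | assumption
    | (rw [Sym2.eq_swap]; assumption)

theorem wins_of_hasCopy {V W : Type*} {G : SimpleGraph V} {H : SimpleGraph W}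
    {R B : Set (Sym2 ℕ)} (n : ℕ) (h : HasCopy G R ∨ HasCopy H B) :
    BuilderWinsIn G H R B n := by
  cases n with
  | zero => exact h
  | succ n => exact h.elim Or.inl fun h => Or.inr (Or.inl h)

theorem Strat.sound {w : Fin 7 → ℕ} (hw : Function.Injective w) (s : Strat) :
    ∀ (R B : List (Fin 7 × Fin 7)) (n : ℕ), s.check R B n = true →
      BuilderWinsIn (cycleGraph 4) (pathGraph 6) (edgesOf w R) (edgesOf w B) n := by
  induction s with
  | red a b c d =>
    intro R B n h
    simp only [Strat.check, Bool.and_eq_true, decide_eq_true_eq] at h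
    obtain ⟨hn, ⟨⟨h1, h2⟩, h3⟩, h4⟩ := h
    exact wins_of_hasCopy n (Or.inl (hasCopy_cycle hw hn h1 h2 h3 h4))
  | blue a b c d e f =>
    intro R B n h
    simp only [Strat.check, Bool.and_eq_true, decide_eq_true_eq] at h
    obtain ⟨hn, ⟨⟨⟨h1, h2⟩, h3⟩, h4⟩, h5⟩ := h
    exact wins_of_hasCopy n (Or.inr (hasCopy_path hw hn h1 h2 h3 h4 h5))
  | move x y l r ihl ihr =>
    intro R B n h
    cases n with
    | zero => simp [Strat.check] at h
    | succ n =>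
      simp only [Strat.check, Bool.and_eq_true, decide_eq_true_eq, Bool.not_eq_true'] at h
      obtain ⟨⟨hxy, hR, hB⟩, hl, hr⟩ := h
      refine Or.inr (Or.inr ⟨s(w x, w y), ?_, ?_, ?_, ?_, ?_⟩)
      · rw [Sym2.mk_isDiag_iff]
        exact fun h => hxy (hw h)
      · rw [mem_edgesOf hw, hR]
        simp
      · rw [mem_edgesOf hw, hB]
        simp
      · rw [← edgesOf_cons]
        exact ihl _ _ _ hl
      · rw [← edgesOf_cons]
        exact ihr _ _ _ hr

/-- The winning strategy from case `R7`; labels `0, …, 5` are the path, `6` is a new vertex. -/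
def stratR7 : Strat :=
  (.move 0 2
   (.move 0 3
    (.move 1 3
     (.red 0 1 3 2)
     (.move 0 4
      (.red 0 2 3 4)
      (.move 0 5
       (.move 2 5
        (.red 0 3 2 5)
        (.blue 0 4 5 2 1 3))
       (.move 2 4
        (.red 0 2 4 3)
        (.blue 0 5 4 2 1 3)))))
    (.move 1 3
     (.red 0 1 3 2)
     (.move 0 4
      (.red 0 2 3 4)
      (.blue 2 1 3 0 4 5))))
   (.move 0 3
    (.move 1 3
     (.move 0 4
      (.red 0 1 3 4)
      (.move 0 6
       (.move 1 6
        (.red 0 3 1 6)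
        (.blue 5 4 0 2 1 6))
       (.move 1 4
        (.red 0 1 4 3)
        (.blue 5 4 1 2 0 6))))
     (.move 0 4
      (.move 0 5
       (.move 3 5
        (.red 0 4 3 5)
        (.blue 0 2 1 3 5 4))
       (.blue 3 1 2 0 5 4))
      (.blue 3 1 2 0 4 5)))
    (.move 1 3
     (.move 0 4
      (.red 0 1 3 4)
      (.move 1 5
       (.move 2 5
        (.red 1 3 2 5)
        (.blue 1 2 5 4 0 3))
       (.blue 2 1 5 4 0 3)))
     (.move 0 4
      (.move 0 5
       (.move 3 5
        (.red 0 4 3 5)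
        (.blue 0 2 1 3 5 4))
       (.blue 2 1 3 0 5 4))
      (.blue 2 1 3 0 4 5)))))

/-- Case `R7`: in the online Ramsey game with targets red `C₄` and blue `P₆`,
from the position in which the five edges `v₁v₂, v₂v₃, v₃v₄, v₄v₅, v₅v₆` of a path on
six distinct vertices have been colored red, blue, red, red, blue respectively,
Builder can force a red copy of `C₄` or a blue copy of `P₆` within at most 6 additional
rounds (so within at most 11 rounds in total). -/
theorem builder_wins_case_R7 (v : Fin 6 → ℕ) (hv : Function.Injective v) :
    BuilderWinsIn (cycleGraph 4) (pathGraph 6)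
      {s(v 0, v 1), s(v 2, v 3), s(v 3, v 4)}
      {s(v 1, v 2), s(v 4, v 5)} 6 := by
  obtain ⟨u, hu⟩ := Infinite.exists_notMem_finset (Finset.univ.image v)
  have hu' : ∀ i, v i ≠ u := fun i h => hu (by simp [← h])
  have hw : Function.Injective (Fin.snoc v u : Fin 7 → ℕ) := by
    rw [Fin.snoc_injective_iff]
    exact ⟨hv, fun ⟨i, hi⟩ => hu' i hi⟩
  have key := Strat.sound hw stratR7 [(0, 1), (2, 3), (3, 4)] [(1, 2), (4, 5)] 6 (by decide)
  have h0 : edgesOf (Fin.snoc v u : Fin 7 → ℕ) [] = ∅ := by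
    simp [edgesOf]
  simp only [edgesOf_cons, h0, insert_empty_eq] at key
  exact key
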